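/- There is no minor-preserving map from Pol({0,1,2}; C_3, R^=_2) to Pol({0,1,2}; C_3, R^=_3). -/

import Mathlib

/-- The three-element domain `{0,1,2}`. -/
abbrev D3 : Type := Fin 3

/-- `n`-ary operations on `{0,1,2}`. -/
abbrev Op (n : ℕ) : Type := (Fin n → D3) → D3

/-- An `n`-ary operation `f` preserves a `k`-ary relation `R`. -/
def Preserves {n k : ℕ} (f : Op n) (R : Set (Fin k → D3)) : Prop :=
  ∀ t : Fin n → (Fin k → D3), (∀ i, t i ∈ R) → (fun j => f fun i => t i j) ∈ R

/-- `C₃ = {(0,1),(1,2),(2,0)}`. -/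
def C3rel : Set (Fin 2 → D3) :=
  { t | (t 0 = 0 ∧ t 1 = 1) ∨ (t 0 = 1 ∧ t 1 = 2) ∨ (t 0 = 2 ∧ t 1 = 0) }

/-- `R⁼₂ = {(x,y,z) : x ∈ {0,1} ∧ (x = 0 → y = z ∈ {0,1})}`. -/
def Req2rel : Set (Fin 3 → D3) :=
  { t | (t 0 = 0 ∨ t 0 = 1) ∧ (t 0 = 0 → t 1 = t 2 ∧ (t 1 = 0 ∨ t 1 = 1)) }

/-- `R⁼₃ = {(x,y,z) : x ∈ {0,1} ∧ (x = 0 → y = z)}`. -/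
def Req3rel : Set (Fin 3 → D3) :=
  { t | (t 0 = 0 ∨ t 0 = 1) ∧ (t 0 = 0 → t 1 = t 2) }

/-- The polymorphism clone of a family of relations on `{0,1,2}`. -/
def Pol (A : Set (Σ k : ℕ, Set (Fin k → D3))) : ∀ n, Set (Op n) :=
  fun n => { f | ∀ R ∈ A, Preserves f R.2 }

/-- The minor `f_π` of an `n`-ary operation `f` along `π`. -/
def minor {n r : ℕ} (f : Op n) (π : Fin n → Fin r) : Op r :=
  fun x => f fun i => x (π i)

/-- `ξ` is a minor-preserving map from `C` to `D`. -/
def IsMinorHom (C D : ∀ n, Set (Op n)) (ξ : ∀ n, Op n → Op n) : Prop :=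
  (∀ n, ∀ f ∈ C n, ξ n f ∈ D n) ∧
  (∀ (n r : ℕ) (f : Op n) (π : Fin n → Fin r), f ∈ C n → ξ r (minor f π) = minor (ξ n f) π)

def rps (x y : D3) : D3 := if y = x + 1 then y else x

def w4 (a b c d : D3) : D3 :=
  if a ≠ b ∧ b ≠ c ∧ a ≠ c then d else rps (rps a b) c

def wop : Op 4 := fun x => w4 (x 0) (x 1) (x 2) (x 3)

lemma C3rel_iff (t : Fin 2 → D3) : t ∈ C3rel ↔ t 1 = t 0 + 1 := by
  simp only [C3rel, Set.mem_setOf_eq]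
  generalize t 0 = a
  generalize t 1 = b
  revert a b; decide

lemma w4_shift : ∀ a b c d : D3, w4 (a+1) (b+1) (c+1) (d+1) = w4 a b c d + 1 := by decide

lemma w4_01 : ∀ a b c d : D3, (a = 0 ∨ a = 1) → (b = 0 ∨ b = 1) → (c = 0 ∨ c = 1) →
    (w4 a b c d = 0 ∨ w4 a b c d = 1) ∧ (w4 a b c d = 0 → a = 0 ∧ b = 0 ∧ c = 0) := by decide

lemma w4_indep : ∀ a b c d e : D3, (a = 0 ∨ a = 1) → (b = 0 ∨ b = 1) → (c = 0 ∨ c = 1) →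
    w4 a b c d = w4 a b c e := by decide

lemma wop_mem : wop ∈ Pol ({⟨2, C3rel⟩, ⟨3, Req2rel⟩} : Set (Σ k : ℕ, Set (Fin k → D3))) 4 := by
  intro R hR
  rcases hR with rfl | rfl
  · intro t ht
    have h := fun i => (C3rel_iff _).1 (ht i)
    refine (C3rel_iff _).2 ?_
    simp only [wop, h]
    exact w4_shift _ _ _ _
  · intro t ht
    obtain ⟨a0, b0⟩ := ht 0
    obtain ⟨a1, b1⟩ := ht 1
    obtain ⟨a2, b2⟩ := ht 2
    obtain ⟨h1, h2⟩ := w4_01 _ _ _ (t 3 0) a0 a1 a2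
    refine ⟨h1, fun h => ?_⟩
    obtain ⟨e0, e1, e2⟩ := h2 h
    obtain ⟨c0, d0⟩ := b0 e0
    obtain ⟨c1, d1⟩ := b1 e1
    obtain ⟨c2, d2⟩ := b2 e2
    refine ⟨?_, (w4_01 _ _ _ (t 3 1) d0 d1 d2).1⟩
    simp only [wop]
    rw [← c0, ← c1, ← c2]
    exact w4_indep _ _ _ _ _ d0 d1 d2

lemma id_mem (A : Set (Σ k : ℕ, Set (Fin k → D3))) : (fun x => x 0 : Op 1) ∈ Pol A 1 :=
  fun _ _ _ ht => ht 0

lemma minor_mem {A : Set (Σ k : ℕ, Set (Fin k → D3))} {n r : ℕ} {f : Op n} (hf : f ∈ Pol A n)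
    (π : Fin n → Fin r) : minor f π ∈ Pol A r :=
  fun R hR t ht => hf R hR (fun i => t (π i)) (fun i => ht (π i))

theorem stmt14 :
    ¬ ∃ ξ, IsMinorHom
      (Pol ({⟨2, C3rel⟩, ⟨3, Req2rel⟩} : Set (Σ k : ℕ, Set (Fin k → D3))))
      (Pol ({⟨2, C3rel⟩, ⟨3, Req3rel⟩} : Set (Σ k : ℕ, Set (Fin k → D3)))) ξ := by
  rintro ⟨ξ, hξ, hm⟩
  have shift : ∀ n, ∀ g ∈ Pol ({⟨2, C3rel⟩, ⟨3, Req3rel⟩} : Set (Σ k : ℕ, Set (Fin k → D3))) n,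
      ∀ x : Fin n → D3, g (fun i => x i + 1) = g x + 1 := by
    intro n g hg x
    have := hg ⟨2, C3rel⟩ (by simp) (fun i => ![x i, x i + 1])
      (fun i => (C3rel_iff _).2 (by simp))
    simpa using (C3rel_iff _).1 this
  have hu := hξ 1 _ (id_mem _)
  have hw := hξ 4 _ wop_mem
  set u := ξ 1 (fun x => x 0) with hudef
  set G := ξ 4 wop with hG
  have u0 : u (fun _ => 0) = 0 := by
    have h1 := shift 1 u hu (fun _ => 0)
    have h2 := (hu ⟨3, Req3rel⟩ (by simp) (fun _ _ => 0) (fun _ => by simp [Req3rel])).1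
    have h3 := (hu ⟨3, Req3rel⟩ (by simp) (fun _ _ => 1) (fun _ => by simp [Req3rel])).1
    simp only [zero_add] at h1
    simp only [h1] at h2 h3
    clear h1
    generalize u (fun _ => 0) = a at h2 h3 ⊢
    revert a; decide
  have key : minor wop ![0,0,0,1] = minor (fun x => x 0 : Op 1) (![0] : Fin 1 → Fin 2) := by
    funext x
    have : ∀ a d : D3, w4 a a a d = a := by decide
    exact this _ _
  have G0 : G ![0,0,0,1] = 0 := by
    have h := hm 4 2 wop ![0,0,0,1] wop_mem
    rw [key, hm 1 2 _ _ (id_mem _)] at h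
    have h := congrFun h ![0,1]
    simp only [minor] at h
    rw [← hudef, ← hG] at h
    have e1 : (fun i : Fin 1 => (![0,1] : Fin 2 → D3) ((![0] : Fin 1 → Fin 2) i)) = fun _ => 0 := by
      decide
    have e2 : (fun i : Fin 4 => (![0,1] : Fin 2 → D3) ((![0,0,0,1] : Fin 4 → Fin 2) i))
      = ![0,0,0,1] := by decide
    rw [e1, e2, u0] at h
    exact h.symm
  have indep : ∀ a b c d e : D3, G ![a,b,c,d] = G ![a,b,c,e] := by
    intro a b c d e
    have h := (hw ⟨3, Req3rel⟩ (by simp) ![![0,a,a],![0,b,b],![0,c,c],![1,d,e]]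
      (fun i => by fin_cases i <;> simp [Req3rel])).2
    have e0 : (fun i => (![![0,a,a],![0,b,b],![0,c,c],![1,d,e]] : Fin 4 → Fin 3 → D3) i 0)
      = ![0,0,0,1] := by funext i; fin_cases i <;> rfl
    have e1 : (fun i => (![![0,a,a],![0,b,b],![0,c,c],![1,d,e]] : Fin 4 → Fin 3 → D3) i 1)
      = ![a,b,c,d] := by funext i; fin_cases i <;> rfl
    have e2 : (fun i => (![![0,a,a],![0,b,b],![0,c,c],![1,d,e]] : Fin 4 → Fin 3 → D3) i 2)
      = ![a,b,c,e] := by funext i; fin_cases i <;> rfl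
    simp only [e0, e1, e2] at h
    exact h G0
  have key2 : minor wop (![0,1,2,1] : Fin 4 → Fin 3) = minor wop ![1,2,0,1] := by
    funext x
    have : ∀ a b c : D3, w4 a b c b = w4 b c a b := by decide
    exact this _ _ _
  have h := hm 4 3 wop ![0,1,2,1] wop_mem
  rw [key2, hm 4 3 wop _ wop_mem] at h
  have h := congrFun h ![0,1,2]
  simp only [minor] at h
  rw [← hG] at h
  have e1 : (fun i : Fin 4 => (![0,1,2] : Fin 3 → D3) ((![1,2,0,1] : Fin 4 → Fin 3) i))
    = fun i => (![0,1,2,0] : Fin 4 → D3) i + 1 := by decide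
  have e2 : (fun i : Fin 4 => (![0,1,2] : Fin 3 → D3) ((![0,1,2,1] : Fin 4 → Fin 3) i))
    = ![0,1,2,1] := by decide
  rw [e1, e2, shift 4 G hw, indep 0 1 2 1 0] at h
  generalize G ![0,1,2,0] = a at h
  revert a; decide
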